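/- arXiv:1909.03356 — 2 statements merged into one kernel-verified Lean document; each statement's English description precedes it below -/
import Mathlib

section
/- Let (λ_n)_{n∈ℕ} be a strictly increasing sequence of real numbers with λ_n → ∞, and let (ν_n)_{n∈ℕ} and (ν̃_n)_{n∈ℕ} be real sequences satisfying λ_n < ν_n < λ_{n+1} and λ_n < ν̃_n < λ_{n+1} for all n ∈ ℕ, with ∑_{n∈ℕ}(ν_n − λ_n) < ∞ and ∑_{n∈ℕ}(ν̃_n − λ_n) < ∞. Let A ⊆ ℕ. Suppose there is a real constant c > 0 such that R_k(ν) = c·R_k(ν̃) for every k ∈ A, suppose ν_n = ν̃_n for every n ∈ ℕ∖A, and suppose ν_m = ν̃_m for some m ∈ A. Then c = 1 and ν_n = ν̃_n for every n ∈ ℕ. -/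
/-!
The idea is to expand the product over `A` alone into partial fractions and to evaluate the
expansion at its real zeros, so that no complex analysis is needed.

Put `μ n = ν n` for `n ∈ A` and `μ n = λ n` otherwise, so that the factors outside `A` become
trivial. For `k ∈ A` one has `R_k(ν) = R_k(μ) · p_k` with `p_k > 0` depending only on the part of
`ν` outside `A` (`Rres_split`); hence the hypothesis on the residues passes to `μ` and `μ̃`.

The truncated products satisfy `∏_{n<N} (x - μ n)/(x - λ n) = 1 + ∑_{k<N} r_{N,k}/(x - λ k)`
(`prod_eq_one_add_sum`), the `r_{N,k}` are nonpositive, `-r_{N,k}` increases to `-R_k(μ)` as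
`N → ∞` for `N ≥ k`, and `∑_{k<N} (-r_{N,k}) = ∑_{n<N} (μ n - λ n)` (`sum_trunc`). The last
two facts make `R_k(μ)` summable, and dominated convergence at the zero `x = μ j` gives
`∑_k R_k(μ)/(μ j - λ k) = -1` whenever `λ j < μ j` (`hasSum_Rres`).

At the common zero `ν m = ν̃ m` this says `-1 = c · (-1)`, so `c = 1` and the two families
`R_k(μ)`, `R_k(μ̃)` coincide. Since `R_k ≤ 0`, the function `x ↦ ∑_k R_k/(x - λ k)` is strictly
increasing between `λ j` and `λ (j+1)`, so it takes the value `-1` only once there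
(`not_lt_of_Rres_eq`), whence `ν j = ν̃ j`.
-/

open Filter

/-- The residue `R_k(ν) = (λ_k − ν_k)·∏_{n≠k} (λ_k − ν_n)/(λ_k − λ_n)`. -/
noncomputable def Rres (lam nu : ℕ → ℝ) (k : ℕ) : ℝ :=
  (lam k - nu k) * ∏' n : {n : ℕ // n ≠ k}, (lam k - nu n) / (lam k - lam n)

/-! ### Truncated products and their partial fractions -/

/-- The `n`-th factor of the product in `Rres lam mu k`, with the excluded factor `n = k`
replaced by `1`, so that products may run over all of `ℕ`. -/
noncomputable def fac (lam mu : ℕ → ℝ) (k n : ℕ) : ℝ :=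
  if n = k then 1 else (lam k - mu n) / (lam k - lam n)

/-- The truncated residue: for `k < N` it is the residue at `lam k` of
`∏_{n<N} (x - mu n)/(x - lam n)`. -/
noncomputable def trunc (lam mu : ℕ → ℝ) (N k : ℕ) : ℝ :=
  (lam k - mu k) * ∏ n ∈ Finset.range N, fac lam mu k n

lemma trunc_succ (lam mu : ℕ → ℝ) (N k : ℕ) :
    trunc lam mu (N + 1) k = trunc lam mu N k * fac lam mu k N := by
  simp only [trunc, Finset.prod_range_succ, mul_assoc]

lemma fac_eq_one_add {lam mu : ℕ → ℝ} (hmono : StrictMono lam) {k n : ℕ} (h : n ≠ k) :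
    fac lam mu k n = 1 + (lam n - mu n) / (lam k - lam n) := by
  have : lam k - lam n ≠ 0 := sub_ne_zero.2 fun e => h (hmono.injective e).symm
  rw [fac, if_neg h]
  field_simp
  ring

lemma trunc_succ_self (lam mu : ℕ → ℝ) (N : ℕ) :
    trunc lam mu (N + 1) N =
      (lam N - mu N) * ∏ n ∈ Finset.range N, (lam N - mu n) / (lam N - lam n) := by
  rw [trunc_succ, trunc, fac, if_pos rfl, mul_one]
  congr 1
  refine Finset.prod_congr rfl fun n hn => ?_
  rw [fac, if_neg (Finset.mem_range.1 hn).ne]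

/-- Partial fractions for the truncated product. -/
lemma prod_eq_one_add_sum {lam mu : ℕ → ℝ} (hmono : StrictMono lam) (N : ℕ) (x : ℝ)
    (hx : ∀ n < N, x ≠ lam n) :
    ∏ n ∈ Finset.range N, (x - mu n) / (x - lam n) =
      1 + ∑ k ∈ Finset.range N, trunc lam mu N k / (x - lam k) := by
  induction N generalizing x with
  | zero => simp
  | succ N ih =>
    -- the induction hypothesis at `lam N` computes the new residue
    have hN := ih (lam N) fun n hn e => hn.ne' (hmono.injective e)
    have hT : trunc lam mu (N + 1) N = (lam N - mu N) *
        (1 + ∑ k ∈ Finset.range N, trunc lam mu N k / (lam N - lam k)) := by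
      rw [← hN, trunc_succ_self]
    have hxN : x - lam N ≠ 0 := sub_ne_zero.2 (hx N N.lt_succ_self)
    rw [Finset.prod_range_succ, ih x fun n hn => hx n (hn.trans N.lt_succ_self),
      Finset.sum_range_succ, hT]
    have key : ∑ k ∈ Finset.range N, trunc lam mu (N + 1) k / (x - lam k) =
        (∑ k ∈ Finset.range N, trunc lam mu N k / (x - lam k)) * ((x - mu N) / (x - lam N)) -
        (lam N - mu N) * (∑ k ∈ Finset.range N, trunc lam mu N k / (lam N - lam k)) /
          (x - lam N) := by
      rw [Finset.sum_mul, Finset.mul_sum, Finset.sum_div, ← Finset.sum_sub_distrib]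
      refine Finset.sum_congr rfl fun k hk => ?_
      have hk := Finset.mem_range.1 hk
      have h1 : x - lam k ≠ 0 := sub_ne_zero.2 (hx k (hk.trans N.lt_succ_self))
      have h2 : lam N - lam k ≠ 0 := (sub_pos.2 (hmono hk)).ne'
      have h3 : lam k - lam N ≠ 0 := (sub_neg.2 (hmono hk)).ne
      rw [trunc_succ, fac, if_neg hk.ne']
      have h4 : lam k - lam N = -(lam N - lam k) := by ring
      rw [h4]
      field_simp
      ring
    rw [key]
    field_simp
    ring

/-- Both sides are the coefficient of `1/x` at infinity of the truncated product. -/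
lemma sum_trunc {lam mu : ℕ → ℝ} (hmono : StrictMono lam) (N : ℕ) :
    ∑ k ∈ Finset.range N, trunc lam mu N k = ∑ n ∈ Finset.range N, (lam n - mu n) := by
  induction N with
  | zero => simp
  | succ N ih =>
    have hN := prod_eq_one_add_sum (mu := mu) hmono N (lam N)
      fun n hn e => hn.ne' (hmono.injective e)
    have hT : trunc lam mu (N + 1) N = (lam N - mu N) *
        (1 + ∑ k ∈ Finset.range N, trunc lam mu N k / (lam N - lam k)) := by
      rw [← hN, trunc_succ_self]
    have key : ∑ k ∈ Finset.range N, trunc lam mu (N + 1) k =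
        ∑ k ∈ Finset.range N, trunc lam mu N k -
        (lam N - mu N) * ∑ k ∈ Finset.range N, trunc lam mu N k / (lam N - lam k) := by
      rw [Finset.mul_sum, ← Finset.sum_sub_distrib]
      refine Finset.sum_congr rfl fun k hk => ?_
      have hk := Finset.mem_range.1 hk
      have h2 : lam N - lam k ≠ 0 := (sub_pos.2 (hmono hk)).ne'
      rw [trunc_succ, fac_eq_one_add hmono hk.ne']
      have h4 : lam k - lam N = -(lam N - lam k) := by ring
      rw [h4]
      field_simp
      ring
    rw [Finset.sum_range_succ, Finset.sum_range_succ, hT, key, ih]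
    ring

/-! ### Passage to the limit -/

section Interlacing

variable {lam mu : ℕ → ℝ}

lemma fac_pos (hmono : StrictMono lam) (hint : ∀ n, lam n ≤ mu n ∧ mu n < lam (n + 1))
    (k n : ℕ) : 0 < fac lam mu k n := by
  rw [fac]
  split_ifs with h
  · exact one_pos
  · rcases lt_or_gt_of_ne h with h | h
    · have := hmono.monotone (Nat.succ_le_of_lt h)
      have := (hint n).2
      exact div_pos (by simp only [Nat.succ_eq_add_one] at *; linarith)
        (sub_pos.2 (hmono h))
    · have := (hint n).1
      have := hmono h
      exact div_pos_of_neg_of_neg (by linarith) (by linarith)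

lemma one_le_fac (hmono : StrictMono lam) (hint : ∀ n, lam n ≤ mu n ∧ mu n < lam (n + 1))
    {k n : ℕ} (h : k ≤ n) : 1 ≤ fac lam mu k n := by
  rcases h.eq_or_lt with rfl | h
  · simp [fac]
  · rw [fac_eq_one_add hmono h.ne', le_add_iff_nonneg_right]
    exact div_nonneg_of_nonpos (sub_nonpos.2 (hint n).1) (sub_neg.2 (hmono h)).le

lemma multipliable_fac (hmono : StrictMono lam)
    (hint : ∀ n, lam n ≤ mu n ∧ mu n < lam (n + 1))
    (hsum : Summable fun n => mu n - lam n) (k : ℕ) : Multipliable (fac lam mu k) := by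
  have hs : Summable fun n => fac lam mu k n - 1 := by
    refine Summable.of_norm_bounded_eventually_nat
      (g := fun n => (mu n - lam n) * (lam (k + 1) - lam k)⁻¹) (hsum.mul_right _) ?_
    filter_upwards [eventually_gt_atTop k] with n hn
    have h1 : lam (k + 1) ≤ lam n := hmono.monotone hn
    have h0 : lam k < lam (k + 1) := hmono k.lt_succ_self
    rw [fac_eq_one_add hmono hn.ne', add_sub_cancel_left, norm_div, Real.norm_eq_abs,
      Real.norm_eq_abs, abs_of_nonpos (by linarith [(hint n).1] : lam n - mu n ≤ 0),
      abs_of_neg (by linarith : lam k - lam n < 0), ← div_eq_mul_inv]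
    exact div_le_div₀ (by linarith [(hint n).1]) (by linarith) (by linarith) (by linarith)
  simpa using Real.multipliable_one_add_of_summable hs

lemma tprod_subtype_eq (k : ℕ) :
    ∏' n : {n : ℕ // n ≠ k}, (lam k - mu n) / (lam k - lam n) = ∏' n, fac lam mu k n := by
  have h := tprod_subtype {n : ℕ | n ≠ k} (fun n => (lam k - mu n) / (lam k - lam n))
  refine h.trans (tprod_congr fun n => ?_)
  by_cases hn : n = k <;> simp [fac, Set.mulIndicator, hn]

lemma Rres_eq (k : ℕ) : Rres lam mu k = (lam k - mu k) * ∏' n, fac lam mu k n := by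
  rw [Rres, tprod_subtype_eq]

lemma tprod_fac_pos (hmono : StrictMono lam)
    (hint : ∀ n, lam n ≤ mu n ∧ mu n < lam (n + 1))
    (hsum : Summable fun n => mu n - lam n) (k : ℕ) : 0 < ∏' n, fac lam mu k n := by
  have ht := (multipliable_fac hmono hint hsum k).hasProd.tendsto_prod_nat
  -- the partial products are positive and increase from the index `k` on
  refine (Finset.prod_pos fun n _ => fac_pos hmono hint k n).trans_le
    (ge_of_tendsto ht (b := ∏ n ∈ Finset.range k, fac lam mu k n) ?_)
  filter_upwards [eventually_ge_atTop k] with N hN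
  induction N, hN using Nat.le_induction with
  | base => exact le_rfl
  | succ N hN ih =>
    rw [Finset.prod_range_succ]
    exact ih.trans (le_mul_of_one_le_right
      (Finset.prod_nonneg fun n _ => (fac_pos hmono hint k n).le) (one_le_fac hmono hint hN))

lemma tendsto_trunc (hmono : StrictMono lam)
    (hint : ∀ n, lam n ≤ mu n ∧ mu n < lam (n + 1))
    (hsum : Summable fun n => mu n - lam n) (k : ℕ) :
    Tendsto (fun N => trunc lam mu N k) atTop (nhds (Rres lam mu k)) := by
  rw [Rres_eq]
  exact (multipliable_fac hmono hint hsum k).hasProd.tendsto_prod_nat.const_mul _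

lemma trunc_nonpos (hmono : StrictMono lam)
    (hint : ∀ n, lam n ≤ mu n ∧ mu n < lam (n + 1)) (N k : ℕ) : trunc lam mu N k ≤ 0 :=
  mul_nonpos_of_nonpos_of_nonneg (sub_nonpos.2 (hint k).1)
    (Finset.prod_nonneg fun n _ => (fac_pos hmono hint k n).le)

lemma Rres_le_trunc (hmono : StrictMono lam)
    (hint : ∀ n, lam n ≤ mu n ∧ mu n < lam (n + 1))
    (hsum : Summable fun n => mu n - lam n) {N k : ℕ} (hk : k ≤ N) :
    Rres lam mu k ≤ trunc lam mu N k := by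
  refine le_of_tendsto (tendsto_trunc hmono hint hsum k) ?_
  filter_upwards [eventually_ge_atTop N] with M hM
  induction M, hM using Nat.le_induction with
  | base => exact le_rfl
  | succ M hM ih =>
    rw [trunc_succ]
    have h1 := one_le_fac hmono hint (hk.trans hM)
    have h0 := trunc_nonpos hmono hint M k
    nlinarith

lemma Rres_nonpos (hmono : StrictMono lam)
    (hint : ∀ n, lam n ≤ mu n ∧ mu n < lam (n + 1))
    (hsum : Summable fun n => mu n - lam n) (k : ℕ) : Rres lam mu k ≤ 0 :=
  (Rres_le_trunc hmono hint hsum le_rfl).trans (trunc_nonpos hmono hint k k)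

/-- A Fatou argument: the finite sums of `-Rres` are limits of sums of truncated residues, which
`sum_trunc` bounds by `∑ (mu n - lam n)`. -/
lemma summable_neg_Rres (hmono : StrictMono lam)
    (hint : ∀ n, lam n ≤ mu n ∧ mu n < lam (n + 1))
    (hsum : Summable fun n => mu n - lam n) : Summable fun k => -Rres lam mu k := by
  refine summable_of_sum_range_le (c := ∑' n, (mu n - lam n))
    (fun k => neg_nonneg.2 (Rres_nonpos hmono hint hsum k)) fun M => ?_
  have ht : Tendsto (fun N => ∑ k ∈ Finset.range M, -trunc lam mu N k) atTop
      (nhds (∑ k ∈ Finset.range M, -Rres lam mu k)) :=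
    tendsto_finsetSum _ fun k _ => (tendsto_trunc hmono hint hsum k).neg
  refine le_of_tendsto ht ?_
  filter_upwards [eventually_ge_atTop M] with N hN
  calc ∑ k ∈ Finset.range M, -trunc lam mu N k
      ≤ ∑ k ∈ Finset.range N, -trunc lam mu N k :=
        Finset.sum_le_sum_of_subset_of_nonneg (Finset.range_mono hN)
          fun k _ _ => neg_nonneg.2 (trunc_nonpos hmono hint N k)
    _ = ∑ n ∈ Finset.range N, (mu n - lam n) := by
        rw [Finset.sum_neg_distrib, sum_trunc hmono, ← Finset.sum_neg_distrib]
        simp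
    _ ≤ ∑' n, (mu n - lam n) :=
        hsum.sum_le_tsum _ fun n _ => sub_nonneg.2 (hint n).1

/-- The limit of `prod_eq_one_add_sum` at the zero `mu j` of the product. -/
lemma hasSum_Rres (hmono : StrictMono lam)
    (hint : ∀ n, lam n ≤ mu n ∧ mu n < lam (n + 1))
    (hsum : Summable fun n => mu n - lam n) {j : ℕ} (hj : lam j < mu j) :
    HasSum (fun k => Rres lam mu k / (mu j - lam k)) (-1) := by
  -- `d` is the distance from `mu j` to the set of poles
  obtain ⟨d, hd, hdist⟩ : ∃ d > 0, ∀ k, d ≤ |mu j - lam k| := by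
    refine ⟨min (mu j - lam j) (lam (j + 1) - mu j),
      lt_min (sub_pos.2 hj) (sub_pos.2 (hint j).2), fun k => ?_⟩
    rcases le_or_gt k j with h | h
    · have := hmono.monotone h
      exact (min_le_left _ _).trans ((by linarith : _ ≤ mu j - lam k).trans (le_abs_self _))
    · have : lam (j + 1) ≤ lam k := hmono.monotone h
      exact (min_le_right _ _).trans
        ((by linarith : _ ≤ -(mu j - lam k)).trans (neg_le_abs _))
  have hb : Summable fun k => -Rres lam mu k / d :=
    (summable_neg_Rres hmono hint hsum).div_const d
  have hquot : ∀ (k : ℕ) (t : ℝ), Rres lam mu k ≤ t → t ≤ 0 →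
      ‖t / (mu j - lam k)‖ ≤ -Rres lam mu k / d := by
    intro k t h1 h2
    rw [norm_div, Real.norm_eq_abs, Real.norm_eq_abs, abs_of_nonpos h2]
    exact div_le_div₀ (by linarith) (by linarith) hd (hdist k)
  have hs : Summable fun k => Rres lam mu k / (mu j - lam k) :=
    Summable.of_norm_bounded hb fun k =>
      hquot k _ le_rfl (Rres_nonpos hmono hint hsum k)
  have hlim : Tendsto
      (fun N => ∑' k, if k < N then trunc lam mu N k / (mu j - lam k) else 0) atTop
      (nhds (∑' k, Rres lam mu k / (mu j - lam k))) := by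
    refine tendsto_tsum_of_dominated_convergence hb (fun k => ?_)
      (Eventually.of_forall fun N k => ?_)
    · refine ((tendsto_trunc hmono hint hsum k).div_const (mu j - lam k)).congr' ?_
      filter_upwards [eventually_gt_atTop k] with N hN
      rw [if_pos hN]
    · split_ifs with h
      · exact hquot k _ (Rres_le_trunc hmono hint hsum h.le) (trunc_nonpos hmono hint N k)
      · rw [norm_zero]
        exact div_nonneg (neg_nonneg.2 (Rres_nonpos hmono hint hsum k)) hd.le
  have hconst : ∀ᶠ N in atTop,
      (∑' k, if k < N then trunc lam mu N k / (mu j - lam k) else 0) = -1 := by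
    filter_upwards [eventually_gt_atTop j] with N hN
    have h := prod_eq_one_add_sum (mu := mu) hmono N (mu j) fun n _ e => by
      have := hdist n
      rw [e, sub_self, abs_zero] at this
      linarith
    rw [Finset.prod_eq_zero (Finset.mem_range.2 hN) (by simp)] at h
    rw [tsum_eq_sum (s := Finset.range N) fun k hk => by
      rw [if_neg (by simpa using hk)]]
    rw [Finset.sum_congr rfl fun k hk => if_pos (Finset.mem_range.1 hk)]
    linarith
  have := tendsto_nhds_unique (hlim.congr' hconst) tendsto_const_nhds
  rw [← this]
  exact hs.hasSum

end Interlacing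

/-! ### Uniqueness of the zeros -/

/-- `x ↦ ∑_k R_k/(x - lam k)` is strictly increasing on `(lam j, lam (j + 1))`, so its `-1`-level
there cannot contain both `mu j` and a larger `kap j`. -/
lemma not_lt_of_Rres_eq {lam mu kap : ℕ → ℝ} (hmono : StrictMono lam)
    (hint : ∀ n, lam n ≤ mu n ∧ mu n < lam (n + 1))
    (hint' : ∀ n, lam n ≤ kap n ∧ kap n < lam (n + 1))
    (hsum : Summable fun n => mu n - lam n) (hsum' : Summable fun n => kap n - lam n)
    (hR : ∀ k, Rres lam mu k = Rres lam kap k) {j : ℕ} (hj : lam j < mu j) :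
    ¬ mu j < kap j := by
  intro hlt
  have h1 := hasSum_Rres hmono hint hsum hj
  have h2 := hasSum_Rres hmono hint' hsum' (hj.trans hlt)
  simp only [← hR] at h2
  have hRj : Rres lam mu j < 0 := by
    rw [Rres_eq]
    exact mul_neg_of_neg_of_pos (sub_neg.2 hj) (tprod_fac_pos hmono hint hsum j)
  refine lt_irrefl (-1 : ℝ) (hasSum_lt (i := j) (fun k => ?_) ?_ h1 h2)
  · have hinv : (kap j - lam k)⁻¹ ≤ (mu j - lam k)⁻¹ := by
      rcases le_or_gt k j with h | h
      · have := hmono.monotone h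
        exact inv_anti₀ (by linarith) (by linarith)
      · have : lam (j + 1) ≤ lam k := hmono.monotone h
        have := (hint' j).2
        exact (inv_le_inv_of_neg (by linarith) (by linarith)).2 (by linarith)
    simp only [div_eq_mul_inv]
    exact mul_le_mul_of_nonpos_left hinv (Rres_nonpos hmono hint hsum k)
  · have hinv : (kap j - lam j)⁻¹ < (mu j - lam j)⁻¹ :=
      inv_strictAnti₀ (by linarith) (by linarith)
    simp only [div_eq_mul_inv]
    exact mul_lt_mul_of_neg_left hinv hRj

/-! ### Removing the factors off `A` -/

open Classical in
/-- The sequence equal to `nu` on `A` and to `lam` off `A`; replacing `nu` by it removes the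
factors with `n ∉ A` from the product. -/
noncomputable def onSet (lam nu : ℕ → ℝ) (A : Set ℕ) (n : ℕ) : ℝ :=
  if n ∈ A then nu n else lam n

lemma onSet_interlacing {lam nu : ℕ → ℝ} (hmono : StrictMono lam)
    (hint : ∀ n, lam n < nu n ∧ nu n < lam (n + 1)) (A : Set ℕ) (n : ℕ) :
    lam n ≤ onSet lam nu A n ∧ onSet lam nu A n < lam (n + 1) := by
  rw [onSet]
  split_ifs
  · exact ⟨(hint n).1.le, (hint n).2⟩
  · exact ⟨le_rfl, hmono n.lt_succ_self⟩

lemma summable_onSet {lam nu : ℕ → ℝ}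
    (hint : ∀ n, lam n < nu n ∧ nu n < lam (n + 1)) (hsum : Summable fun n => nu n - lam n)
    (A : Set ℕ) : Summable fun n => onSet lam nu A n - lam n := by
  have h (n : ℕ) : 0 < nu n - lam n := sub_pos.2 (hint n).1
  refine Summable.of_nonneg_of_le (fun n => ?_) (fun n => ?_) hsum <;>
  · rw [onSet]
    split_ifs <;> linarith [h n]

/-- For `k ∈ A` the residue splits into the part from `A` and a factor that sees only the values
of `nu` off `A`. -/
lemma Rres_split {lam nu : ℕ → ℝ} (hmono : StrictMono lam)
    (hint : ∀ n, lam n < nu n ∧ nu n < lam (n + 1)) (hsum : Summable fun n => nu n - lam n)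
    (A : Set ℕ) {k : ℕ} (hk : k ∈ A) :
    Rres lam nu k = Rres lam (onSet lam nu A) k * ∏' n, fac lam (onSet lam nu Aᶜ) k n := by
  rw [Rres_eq, Rres_eq, mul_assoc, ← Multipliable.tprod_mul
    (multipliable_fac hmono (onSet_interlacing hmono hint A) (summable_onSet hint hsum A) k)
    (multipliable_fac hmono (onSet_interlacing hmono hint Aᶜ) (summable_onSet hint hsum Aᶜ) k)]
  congr 1
  · rw [onSet, if_pos hk]
  · refine tprod_congr fun n => ?_
    by_cases hn : n = k
    · simp [fac, hn]
    · have : lam k - lam n ≠ 0 := sub_ne_zero.2 fun e => hn (hmono.injective e).symm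
      by_cases hA : n ∈ A <;> simp [fac, hn, onSet, hA, div_self this]

/-! ### The inverse problem -/

/-- analytic core of Theorem 3.5, Inverse problem II:
the residues on `A` known only up to a common positive factor `c`, the part of `ν`
outside `A`, and one additional eigenvalue `ν_m`, `m ∈ A`, determine `ν` and force `c = 1`. -/
theorem inverse_problem_II (lam nu nut : ℕ → ℝ) (A : Set ℕ) (c : ℝ)
    (hmono : StrictMono lam)
    (htend : Tendsto lam atTop atTop)
    (hintl : ∀ n, lam n < nu n ∧ nu n < lam (n + 1))
    (hintl' : ∀ n, lam n < nut n ∧ nut n < lam (n + 1))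
    (hsum : Summable fun n => nu n - lam n)
    (hsum' : Summable fun n => nut n - lam n)
    (hc : 0 < c)
    (hres : ∀ k ∈ A, Rres lam nu k = c * Rres lam nut k)
    (hoff : ∀ n ∉ A, nu n = nut n)
    (m : ℕ) (hm : m ∈ A) (hnum : nu m = nut m) :
    c = 1 ∧ ∀ n, nu n = nut n := by
  have hi := onSet_interlacing hmono hintl A
  have hi' := onSet_interlacing hmono hintl' A
  have hs := summable_onSet hintl hsum A
  have hs' := summable_onSet hintl' hsum' A
  have hval (f : ℕ → ℝ) {j : ℕ} (hj : j ∈ A) : onSet lam f A j = f j := if_pos hj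
  have hcompl : onSet lam nu Aᶜ = onSet lam nut Aᶜ := by
    funext n
    by_cases hn : n ∈ A
    · simp [onSet, hn]
    · simp [onSet, hn, hoff n hn]
  have hR : ∀ k, Rres lam (onSet lam nu A) k = c * Rres lam (onSet lam nut A) k := by
    intro k
    by_cases hk : k ∈ A
    · have h := hres k hk
      rw [Rres_split hmono hintl hsum A hk, Rres_split hmono hintl' hsum' A hk, hcompl,
        ← mul_assoc] at h
      exact mul_right_cancel₀ (tprod_fac_pos hmono (onSet_interlacing hmono hintl' Aᶜ)
        (summable_onSet hintl' hsum' Aᶜ) k).ne' h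
    · simp [Rres, onSet, hk]
  have hc1 : c = 1 := by
    have h1 := hasSum_Rres hmono hi hs (j := m) (by rw [hval nu hm]; exact (hintl m).1)
    have h2 := hasSum_Rres hmono hi' hs' (j := m) (by rw [hval nut hm]; exact (hintl' m).1)
    rw [hval nu hm, hnum] at h1
    rw [hval nut hm] at h2
    simp only [hR, mul_div_assoc] at h1
    have := h1.unique (h2.mul_left c)
    linarith
  refine ⟨hc1, fun n => ?_⟩
  by_cases hn : n ∈ A
  · simp only [hc1, one_mul] at hR
    have h1 := not_lt_of_Rres_eq hmono hi hi' hs hs' hR (j := n)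
      (by rw [hval nu hn]; exact (hintl n).1)
    have h2 := not_lt_of_Rres_eq hmono hi' hi hs' hs (fun k => (hR k).symm) (j := n)
      (by rw [hval nut hn]; exact (hintl' n).1)
    rw [hval nu hn, hval nut hn] at h1 h2
    exact le_antisymm (not_lt.1 h2) (not_lt.1 h1)
  · exact hoff n hn
end

section
/- Let (λ_n)_{n∈ℕ} be a strictly increasing sequence of real numbers with λ_n → ∞ and let (ν_n)_{n∈ℕ} be a real sequence with λ_n < ν_n < λ_{n+1} for all n ∈ ℕ and ∑_{n∈ℕ}(ν_n − λ_n) < ∞. Then for every z ∈ ℂ ∖ {λ_n : n ∈ ℕ}: the infinite product F_ν(z) = ∏_{n∈ℕ}(z − ν_n)/(z − λ_n) converges, for every k ∈ ℕ the product defining R_k(ν) converges and R_k(ν) < 0, the series ∑_{k∈ℕ} R_k(ν)/(z − λ_k) converges absolutely, and F_ν(z) = 1 + ∑_{k∈ℕ} R_k(ν)/(z − λ_k). -/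
/-!
The finite truncations satisfy an exact partial fraction identity
`∏_{n<N} (z − ν_n)/(z − λ_n) = 1 + ∑_{k<N} r_k^N/(z − λ_k)`, proved by induction on `N` using
`1/((z − a)(z − b)) = (1/(z − a) − 1/(z − b))/(a − b)`; the same induction gives
`∑_{k<N} r_k^N = ∑_{n<N} (λ_n − ν_n)`.

By interlacing, all factors of `r_k^N` other than `λ_k − ν_k` are positive, and those with
index `n > k` are at least `1`. So for `N > k` the numbers `−r_k^N` are positive and increase with
`N` to `−R_k`. The residue sum then gives `∑ |R_k| ≤ ∑ (ν_n − λ_n) < ∞`, and dominated convergence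
with the bound `|R_k|/|z − λ_k|` lets `N → ∞` in the finite identity.

Each factor is written as `(z − ν_n)/(z − λ_n) = 1 + (λ_n − ν_n)/(z − λ_n)`. At `z = λ_n` the
right-hand side is `1` in Lean, because division by zero is zero, so the factor `n = k` drops
out of the product for `R_k` without a case distinction.
-/

open Filter

open Finset Topology

/-- The residue at `lam k` of the truncated product `∏_{n<N} (z − ν_n)/(z − λ_n)`, for `k < N`.
The factor `n = k` of the product equals `1`, by division by zero. -/
noncomputable def finRes {K : Type*} [Field K] (lam nu : ℕ → K) (N k : ℕ) : K :=
  (lam k - nu k) * ∏ n ∈ range N, (1 + (lam n - nu n) / (lam k - lam n))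

lemma finRes_succ {K : Type*} [Field K] (lam nu : ℕ → K) (N k : ℕ) :
    finRes lam nu (N + 1) k = finRes lam nu N k * (1 + (lam N - nu N) / (lam k - lam N)) := by
  simp only [finRes, prod_range_succ]
  ring

lemma finRes_succ_self {K : Type*} [Field K] (lam nu : ℕ → K) (N : ℕ) :
    finRes lam nu (N + 1) N =
      (lam N - nu N) * ∏ n ∈ range N, (1 + (lam n - nu n) / (lam N - lam n)) := by
  rw [finRes_succ]
  simp [finRes]

lemma finite_partial_fraction {K : Type*} [Field K] (lam nu : ℕ → K)
    (hinj : Function.Injective lam) (N : ℕ) :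
    ∀ z : K, (∀ n < N, z ≠ lam n) →
      ∏ n ∈ range N, (1 + (lam n - nu n) / (z - lam n)) =
        1 + ∑ k ∈ range N, finRes lam nu N k / (z - lam k) := by
  induction N with
  | zero => simp
  | succ N ih =>
    intro z hz
    have hN : z - lam N ≠ 0 := sub_ne_zero.2 (hz N (by omega))
    rw [prod_range_succ, sum_range_succ, finRes_succ_self,
      ih z fun n hn => hz n (by omega),
      ih (lam N) fun n hn => hinj.ne (by omega)]
    have key : ∀ k ∈ range N, finRes lam nu (N + 1) k / (z - lam k) =
        finRes lam nu N k / (z - lam k) +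
          (lam N - nu N) / (z - lam N) * (finRes lam nu N k / (z - lam k)) -
          (lam N - nu N) / (z - lam N) * (finRes lam nu N k / (lam N - lam k)) := by
      intro k hk
      have hk := mem_range.1 hk
      have h1 : z - lam k ≠ 0 := sub_ne_zero.2 (hz k (by omega))
      have h2 : lam N - lam k ≠ 0 := sub_ne_zero.2 (hinj.ne (by omega))
      have h3 : lam k - lam N = -(lam N - lam k) := by ring
      rw [finRes_succ, h3]
      field_simp
      ring
    rw [sum_congr rfl key, sum_sub_distrib, sum_add_distrib, ← mul_sum, ← mul_sum]
    ring

lemma sum_finRes {K : Type*} [Field K] (lam nu : ℕ → K)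
    (hinj : Function.Injective lam) (N : ℕ) :
    ∑ k ∈ range N, finRes lam nu N k = ∑ n ∈ range N, (lam n - nu n) := by
  induction N with
  | zero => simp
  | succ N ih =>
    rw [sum_range_succ, finRes_succ_self,
      finite_partial_fraction lam nu hinj N (lam N) fun n hn => hinj.ne (by omega),
      sum_range_succ _ N, ← ih]
    have key : ∀ k ∈ range N, finRes lam nu (N + 1) k =
        finRes lam nu N k - (lam N - nu N) * (finRes lam nu N k / (lam N - lam k)) := by
      intro k hk
      have h3 : lam k - lam N = -(lam N - lam k) := by ring
      rw [finRes_succ, h3, div_neg]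
      ring
    rw [sum_congr rfl key, sum_sub_distrib, ← mul_sum]
    ring

/-- Dividing by `z − λ_n` preserves summability, as `|z − λ_n| ≥ 1` for large `n`. -/
lemma summable_div_sub (lam x : ℕ → ℝ) (htend : Tendsto lam atTop atTop)
    (hx : Summable fun n => |x n|) (z : ℂ) :
    Summable fun n => ‖(x n : ℂ) / (z - (lam n : ℂ))‖ := by
  refine Summable.of_norm_bounded_eventually_nat hx ?_
  filter_upwards [htend.eventually_ge_atTop (‖z‖ + 1)] with n hn
  have h1 : (1 : ℝ) ≤ ‖z - (lam n : ℂ)‖ := by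
    have h2 := norm_sub_norm_le (lam n : ℂ) z
    rw [Complex.norm_real, Real.norm_eq_abs, norm_sub_rev] at h2
    linarith [le_abs_self (lam n)]
  rw [norm_norm, norm_div, Complex.norm_real, Real.norm_eq_abs]
  exact div_le_self (abs_nonneg _) h1

section Interlacing

variable {lam nu : ℕ → ℝ}

lemma factor_pos (hmono : StrictMono lam) (hintl : ∀ n, lam n < nu n ∧ nu n < lam (n + 1))
    (k n : ℕ) : 0 < 1 + (lam n - nu n) / (lam k - lam n) := by
  rcases lt_trichotomy n k with h | rfl | h
  · have h1 : lam (n + 1) ≤ lam k := hmono.monotone h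
    have h2 : 0 < lam k - lam n := sub_pos.2 (hmono h)
    have h3 := (hintl n).2
    rw [one_add_div h2.ne']
    exact div_pos (by linarith) h2
  · simp
  · have := div_nonneg_of_nonpos (sub_nonpos.2 (hintl n).1.le) (sub_nonpos.2 (hmono h).le)
    linarith

lemma one_le_factor (hmono : StrictMono lam) (hintl : ∀ n, lam n < nu n ∧ nu n < lam (n + 1))
    {k n : ℕ} (h : k < n) : 1 ≤ 1 + (lam n - nu n) / (lam k - lam n) := by
  have := div_nonneg_of_nonpos (sub_nonpos.2 (hintl n).1.le) (sub_nonpos.2 (hmono h).le)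
  linarith

lemma neg_finRes_pos (hmono : StrictMono lam) (hintl : ∀ n, lam n < nu n ∧ nu n < lam (n + 1))
    (N k : ℕ) : 0 < -finRes lam nu N k := by
  rw [finRes, ← neg_mul]
  exact mul_pos (by linarith [(hintl k).1]) (prod_pos fun n _ => factor_pos hmono hintl k n)

lemma neg_finRes_mono (hmono : StrictMono lam)
    (hintl : ∀ n, lam n < nu n ∧ nu n < lam (n + 1)) {k M N : ℕ} (hk : k < M) (hMN : M ≤ N) :
    -finRes lam nu M k ≤ -finRes lam nu N k := by
  induction N, hMN using Nat.le_induction with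
  | base => exact le_rfl
  | succ N hN ih =>
    rw [finRes_succ, ← neg_mul]
    exact ih.trans (le_mul_of_one_le_right (neg_finRes_pos hmono hintl N k).le
      (one_le_factor hmono hintl (hk.trans_le hN)))

lemma multipliable_factor (htend : Tendsto lam atTop atTop)
    (hsum : Summable fun n => |lam n - nu n|) (z : ℂ) :
    Multipliable fun n => 1 + ((lam n : ℂ) - nu n) / (z - lam n) := by
  apply multipliable_one_add_of_summable
  simpa using summable_div_sub lam (fun n => lam n - nu n) htend hsum z

lemma multipliable_real_factor (htend : Tendsto lam atTop atTop)
    (hsum : Summable fun n => |lam n - nu n|) (k : ℕ) :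
    Multipliable fun n => 1 + (lam n - nu n) / (lam k - lam n) := by
  apply multipliable_one_add_of_summable
  have := summable_div_sub lam (fun n => lam n - nu n) htend hsum (lam k)
  refine this.congr fun n => ?_
  rw [← Complex.ofReal_sub, ← Complex.ofReal_div, Complex.norm_real]

/-- Passing to the subtype `{n // n ≠ k}` is harmless because the factor `n = k` is `1`. -/
lemma hasProd_subtype (hmono : StrictMono lam) (htend : Tendsto lam atTop atTop)
    (hsum : Summable fun n => |lam n - nu n|) (k : ℕ) :
    HasProd (fun n : {n : ℕ // n ≠ k} => (lam k - nu n) / (lam k - lam n))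
      (∏' n, (1 + (lam n - nu n) / (lam k - lam n))) := by
  have h := (multipliable_real_factor htend hsum k).hasProd
  rw [← hasProd_subtype_iff_of_mulSupport_subset (s := {n | n ≠ k})] at h
  · refine (congrArg (HasProd · _) (funext fun n : {n : ℕ // n ≠ k} => ?_)).mp h
    have hn : lam k - lam n ≠ 0 := sub_ne_zero.2 (hmono.injective.ne (Ne.symm n.2))
    simp only [Function.comp]
    field_simp
    ring
  · intro n hn hk
    exact hn (by simp [hk])

lemma tendsto_finRes (hmono : StrictMono lam) (htend : Tendsto lam atTop atTop)
    (hsum : Summable fun n => |lam n - nu n|) (k : ℕ) :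
    Tendsto (fun N => finRes lam nu N k) atTop (𝓝 (Rres lam nu k)) := by
  rw [Rres, (hasProd_subtype hmono htend hsum k).tprod_eq]
  exact (multipliable_real_factor htend hsum k).hasProd.tendsto_prod_nat.const_mul _

lemma neg_finRes_le (hmono : StrictMono lam) (htend : Tendsto lam atTop atTop)
    (hintl : ∀ n, lam n < nu n ∧ nu n < lam (n + 1))
    (hsum : Summable fun n => |lam n - nu n|) {k N : ℕ} (hk : k < N) :
    -finRes lam nu N k ≤ -Rres lam nu k := by
  refine ge_of_tendsto (tendsto_finRes hmono htend hsum k).neg ?_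
  filter_upwards [eventually_ge_atTop N] with M hM
  exact neg_finRes_mono hmono hintl hk hM

lemma Rres_neg (hmono : StrictMono lam) (htend : Tendsto lam atTop atTop)
    (hintl : ∀ n, lam n < nu n ∧ nu n < lam (n + 1))
    (hsum : Summable fun n => |lam n - nu n|) (k : ℕ) : Rres lam nu k < 0 := by
  have h1 := neg_finRes_le hmono htend hintl hsum (Nat.lt_succ_self k)
  have h2 := neg_finRes_pos hmono hintl (k + 1) k
  linarith

lemma summable_Rres (hmono : StrictMono lam) (htend : Tendsto lam atTop atTop)
    (hintl : ∀ n, lam n < nu n ∧ nu n < lam (n + 1))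
    (hsum' : Summable fun n => nu n - lam n)
    (hsum : Summable fun n => |lam n - nu n|) : Summable fun k => |Rres lam nu k| := by
  have habs : ∀ k, |Rres lam nu k| = -Rres lam nu k := fun k =>
    abs_of_neg (Rres_neg hmono htend hintl hsum k)
  simp only [habs]
  refine summable_of_sum_range_le (c := ∑' n, (nu n - lam n))
    (fun k => by linarith [Rres_neg hmono htend hintl hsum k]) fun K => ?_
  refine le_of_tendsto
    (tendsto_finsetSum (range K) fun k _ => (tendsto_finRes hmono htend hsum k).neg) ?_
  filter_upwards [eventually_ge_atTop K] with N hN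
  calc ∑ k ∈ range K, -finRes lam nu N k
      ≤ ∑ k ∈ range N, -finRes lam nu N k :=
        sum_le_sum_of_subset_of_nonneg (range_subset_range.2 hN)
          fun k _ _ => (neg_finRes_pos hmono hintl N k).le
    _ = ∑ n ∈ range N, (nu n - lam n) := by
        rw [sum_neg_distrib, sum_finRes lam nu hmono.injective, ← sum_neg_distrib]
        simp
    _ ≤ ∑' n, (nu n - lam n) :=
        hsum'.sum_le_tsum _ fun n _ => by linarith [(hintl n).1]

end Interlacing

lemma finRes_ofReal (lam nu : ℕ → ℝ) (N k : ℕ) :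
    finRes (fun n => (lam n : ℂ)) (fun n => (nu n : ℂ)) N k = ((finRes lam nu N k : ℝ) : ℂ) := by
  simp [finRes]

/-- partial fraction representation from the proof of Theorem 3.3:
`F_ν(z) = ∏ (z − ν_n)/(z − λ_n)` converges, the residues `R_k(ν)` converge and are
negative, and `F_ν(z) = 1 + ∑ R_k(ν)/(z − λ_k)` with the series absolutely convergent. -/
theorem partial_fraction_representation (lam nu : ℕ → ℝ)
    (hmono : StrictMono lam)
    (htend : Tendsto lam atTop atTop)
    (hintl : ∀ n, lam n < nu n ∧ nu n < lam (n + 1))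
    (hsum : Summable fun n => nu n - lam n) :
    (∀ k, (Multipliable fun n : {n : ℕ // n ≠ k} =>
        (lam k - nu n) / (lam k - lam n)) ∧ Rres lam nu k < 0) ∧
    ∀ z : ℂ, (∀ n, z ≠ (lam n : ℂ)) →
      (Multipliable fun n => (z - (nu n : ℂ)) / (z - (lam n : ℂ))) ∧
      (Summable fun k => ‖(Rres lam nu k : ℂ) / (z - (lam k : ℂ))‖) ∧
      (∏' n, (z - (nu n : ℂ)) / (z - (lam n : ℂ))) =
        1 + ∑' k, (Rres lam nu k : ℂ) / (z - (lam k : ℂ)) := by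
  have habs : Summable fun n => |lam n - nu n| := by
    refine hsum.congr fun n => ?_
    rw [abs_of_neg (by linarith [(hintl n).1])]
    ring
  refine ⟨fun k => ⟨(hasProd_subtype hmono htend habs k).multipliable,
    Rres_neg hmono htend hintl habs k⟩, fun z hz => ?_⟩
  have hfac : (fun n => (z - (nu n : ℂ)) / (z - (lam n : ℂ))) =
      fun n => 1 + ((lam n : ℂ) - nu n) / (z - lam n) := by
    funext n
    have := sub_ne_zero.2 (hz n)
    field_simp
    ring
  have hmul := multipliable_factor htend habs z
  have hR := summable_div_sub lam _ htend (summable_Rres hmono htend hintl hsum habs) z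
  rw [hfac]
  refine ⟨hmul, hR, tendsto_nhds_unique hmul.hasProd.tendsto_prod_nat ?_⟩
  have hinj : Function.Injective fun n => (lam n : ℂ) :=
    Complex.ofReal_injective.comp hmono.injective
  simp only [fun N => finite_partial_fraction _ (fun n => (nu n : ℂ)) hinj N z fun n _ => hz n,
    finRes_ofReal]
  refine Tendsto.const_add _ ?_
  -- The finite sums become series by extending the terms by zero outside `range N`.
  have hext : ∀ N, ∑ k ∈ range N, ((finRes lam nu N k : ℝ) : ℂ) / (z - lam k) =
      ∑' k, if k < N then ((finRes lam nu N k : ℝ) : ℂ) / (z - lam k) else 0 := by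
    intro N
    rw [tsum_eq_sum (s := range N) fun k hk => if_neg (by simpa using hk)]
    exact sum_congr rfl fun k hk => (if_pos (mem_range.1 hk)).symm
  simp only [hext]
  refine tendsto_tsum_of_dominated_convergence hR (fun k => ?_) (Eventually.of_forall
    fun N k => ?_)
  · have h := ((Complex.continuous_ofReal.tendsto _).comp
      (tendsto_finRes hmono htend habs k)).div_const (z - lam k)
    refine h.congr' ?_
    filter_upwards [eventually_gt_atTop k] with N hN
    simp [hN]
  · split_ifs with hk
    · rw [norm_div, norm_div, Complex.norm_real, Complex.norm_real, Real.norm_eq_abs,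
        Real.norm_eq_abs, abs_of_neg (Rres_neg hmono htend hintl habs k),
        abs_of_neg (neg_pos.1 (neg_finRes_pos hmono hintl N k))]
      gcongr
      exact neg_le_neg_iff.1 (neg_finRes_le hmono htend hintl habs hk)
    · rw [norm_zero]
      exact norm_nonneg _
end
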